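/- arXiv:2106.00500 — 2 statements merged into one kernel-verified Lean document; each statement's English description precedes it below -/
import Mathlib

section
/- The map r ↦ r·tanh(r) is a strictly increasing continuous bijection from [0,∞) onto [0,∞); consequently there is a unique function Φ : [0,∞) → (0,1] satisfying Φ(r·tanh(r)) = tanh(r)/r for all r > 0 and Φ(0) = 1. This function Φ is monotone decreasing and convex on [0,∞). -/
open Set Real

namespace Aux5

lemma nonneg_of_deriv {f f' : ℝ → ℝ} (hf : ∀ x, HasDerivAt f (f' x) x) (h0 : f 0 = 0)
    (h : ∀ x, 0 ≤ x → 0 ≤ f' x) : ∀ x, 0 ≤ x → 0 ≤ f x := by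
  intro x hx
  have hm : MonotoneOn f (Ici 0) := by
    apply monotoneOn_of_deriv_nonneg (convex_Ici 0)
    · exact fun y _ => (hf y).continuousAt.continuousWithinAt
    · exact fun y _ => (hf y).differentiableAt.differentiableWithinAt
    · intro y hy
      rw [interior_Ici] at hy
      rw [(hf y).deriv]
      exact h y (le_of_lt hy)
  have := hm self_mem_Ici hx hx
  rwa [h0] at this

lemma self_le (u : ℝ) (hu : 0 ≤ u) : u ≤ sinh u := self_le_sinh_iff.mpr hu

lemma cosh_bd (u : ℝ) (hu : 0 ≤ u) : 0 ≤ 2 * cosh u - 2 - u ^ 2 := by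
  refine nonneg_of_deriv (f := fun u => 2 * cosh u - 2 - u ^ 2) (f' := fun u => 2 * (sinh u - u))
    ?_ (by simp) ?_ u hu
  · intro x
    have := (((hasDerivAt_cosh x).const_mul 2).sub_const 2).sub (hasDerivAt_pow 2 x)
    refine HasDerivAt.congr_deriv this ?_
    simp; try ring
  · intro x hx
    have := self_le x hx
    linarith

lemma G3 (u : ℝ) (hu : 0 ≤ u) :
    0 ≤ 8 * sinh u * cosh u - 3 * sinh u - 5 * u * cosh u - u ^ 2 * sinh u := by
  have h1 := self_le u hu
  have h2 := cosh_bd u hu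
  have h3 : 0 ≤ sinh u := hu.trans h1
  have h4 := cosh_pos u
  nlinarith [mul_nonneg h3 h2, mul_nonneg h4.le (sub_nonneg.2 h1), mul_nonneg h3 (sq_nonneg u)]

lemma G2 (u : ℝ) (hu : 0 ≤ u) :
    0 ≤ 4 * sinh u ^ 2 - 3 * u * sinh u - u ^ 2 * cosh u := by
  refine nonneg_of_deriv (f := fun u => 4 * sinh u ^ 2 - 3 * u * sinh u - u ^ 2 * cosh u)
    (f' := fun u => 8 * sinh u * cosh u - 3 * sinh u - 5 * u * cosh u - u ^ 2 * sinh u)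
    ?_ (by simp) G3 u hu
  intro x
  have := ((((hasDerivAt_sinh x).pow 2).const_mul 4).sub
    (((hasDerivAt_id x).const_mul 3).mul (hasDerivAt_sinh x))).sub
    ((hasDerivAt_pow 2 x).mul (hasDerivAt_cosh x))
  refine HasDerivAt.congr_deriv this ?_
  simp; try ring

lemma G1 (u : ℝ) (hu : 0 ≤ u) :
    0 ≤ 2 * sinh u * cosh u + sinh u - u * cosh u - u ^ 2 * sinh u - 2 * u := by
  refine nonneg_of_deriv
    (f := fun u => 2 * sinh u * cosh u + sinh u - u * cosh u - u ^ 2 * sinh u - 2 * u)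
    (f' := fun u => 4 * sinh u ^ 2 - 3 * u * sinh u - u ^ 2 * cosh u)
    ?_ (by simp) G2 u hu
  intro x
  have := ((((((hasDerivAt_sinh x).const_mul 2).mul (hasDerivAt_cosh x)).add
    (hasDerivAt_sinh x)).sub ((hasDerivAt_id x).mul (hasDerivAt_cosh x))).sub
    ((hasDerivAt_pow 2 x).mul (hasDerivAt_sinh x))).sub ((hasDerivAt_id x).const_mul 2)
  refine HasDerivAt.congr_deriv this ?_
  simp
  linear_combination 2 * cosh_sq x

lemma G0 (u : ℝ) (hu : 0 ≤ u) :
    0 ≤ sinh u ^ 2 + u * sinh u - u ^ 2 * cosh u - u ^ 2 := by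
  refine nonneg_of_deriv
    (f := fun u => sinh u ^ 2 + u * sinh u - u ^ 2 * cosh u - u ^ 2)
    (f' := fun u => 2 * sinh u * cosh u + sinh u - u * cosh u - u ^ 2 * sinh u - 2 * u)
    ?_ (by simp) G1 u hu
  intro x
  have := ((((hasDerivAt_sinh x).pow 2).add ((hasDerivAt_id x).mul (hasDerivAt_sinh x))).sub
    ((hasDerivAt_pow 2 x).mul (hasDerivAt_cosh x))).sub (hasDerivAt_pow 2 x)
  refine HasDerivAt.congr_deriv this ?_
  simp; try ring

/-- minus the slope, up to a factor 4 -/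
noncomputable def q (u : ℝ) : ℝ := (sinh u - u) / (u ^ 2 * (sinh u + u))

lemma q_nonneg (u : ℝ) (hu : 0 < u) : 0 ≤ q u := by
  have := self_le u hu.le
  unfold q
  apply div_nonneg (by linarith)
  apply mul_nonneg (sq_nonneg u) (by linarith)

lemma q_anti : AntitoneOn q (Ioi 0) := by
  have hd : ∀ u : ℝ, 0 < u → HasDerivAt q (((cosh u - 1) * (u ^ 2 * (sinh u + u)) -
      (sinh u - u) * (2 * u * (sinh u + u) + u ^ 2 * (cosh u + 1))) /
      (u ^ 2 * (sinh u + u)) ^ 2) u := by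
    intro u hu
    have h1 := self_le u hu.le
    have := ((hasDerivAt_sinh u).sub (hasDerivAt_id u)).div
      ((hasDerivAt_pow 2 u).mul ((hasDerivAt_sinh u).add (hasDerivAt_id u)))
      (by have : 0 < sinh u + u := by linarith
          simp only [Pi.mul_apply, Pi.add_apply, id]; positivity)
    refine HasDerivAt.congr_deriv this ?_
    simp
  apply antitoneOn_of_deriv_nonpos (convex_Ioi 0)
  · exact fun y hy => (hd y hy).continuousAt.continuousWithinAt
  · rw [interior_Ioi]
    exact fun y hy => (hd y hy).differentiableAt.differentiableWithinAt
  · rw [interior_Ioi]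
    intro u hu
    rw [(hd u hu).deriv]
    apply div_nonpos_of_nonpos_of_nonneg _ (sq_nonneg _)
    have hu' : 0 < u := hu
    nlinarith [mul_nonneg hu'.le (G0 u hu'.le)]

lemma hasDerivAt_th (r : ℝ) : HasDerivAt tanh (1 / cosh r ^ 2) r := by
  have h := (hasDerivAt_sinh r).div (hasDerivAt_cosh r) (cosh_pos r).ne'
  have e : tanh = sinh / cosh := by ext x; exact tanh_eq_sinh_div_cosh x
  rw [e]
  refine HasDerivAt.congr_deriv h ?_
  congr 1
  linear_combination cosh_sq r

noncomputable def f : ℝ → ℝ := dslope tanh 0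

lemma f_zero : f 0 = 1 := by
  rw [f, dslope_same, (hasDerivAt_th 0).deriv]; simp

lemma f_pos (r : ℝ) (hr : r ≠ 0) : f r = tanh r / r := by
  rw [f, dslope_of_ne _ hr, slope_def_field]; simp

lemma f_cont : Continuous f := by
  have hc : Continuous tanh := continuous_iff_continuousAt.2 fun r => (hasDerivAt_th r).continuousAt
  rw [continuous_iff_continuousAt]
  intro r
  by_cases hr : r = 0
  · subst hr; exact continuousAt_dslope_same.2 (hasDerivAt_th 0).differentiableAt
  · exact (continuousAt_dslope_of_ne hr).2 hc.continuousAt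

lemma g_deriv (r : ℝ) :
    HasDerivAt (fun r => r * tanh r) (tanh r + r * (1 / cosh r ^ 2)) r := by
  have := (hasDerivAt_id r).mul (hasDerivAt_th r)
  refine HasDerivAt.congr_deriv this ?_
  simp

lemma f_deriv (r : ℝ) (hr : 0 < r) :
    HasDerivAt f (- 4 * q (2 * r) * (tanh r + r * (1 / cosh r ^ 2))) r := by
  have h := (hasDerivAt_th r).div (hasDerivAt_id r) hr.ne'
  have h2 : HasDerivAt f ((1 / cosh r ^ 2 * r - tanh r * 1) / r ^ 2) r := by
    refine h.congr_of_eventuallyEq ?_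
    filter_upwards [lt_mem_nhds hr] with x hx
    simp [f_pos x hx.ne']
  refine HasDerivAt.congr_deriv h2 ?_
  unfold q
  have hs : 0 < sinh r := sinh_pos_iff.2 hr
  have hc := cosh_pos r
  rw [sinh_two_mul, tanh_eq_sinh_div_cosh]
  have : 0 < sinh r * cosh r + r := by positivity
  have h3 : 2 * sinh r * cosh r + 2 * r ≠ 0 := by positivity
  field_simp
  ring

lemma th_pos (r : ℝ) (hr : 0 < r) : 0 < tanh r := by
  rw [tanh_eq_sinh_div_cosh]
  exact div_pos (sinh_pos_iff.2 hr) (cosh_pos r)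

lemma g'_pos (r : ℝ) (hr : 0 < r) : 0 < tanh r + r * (1 / cosh r ^ 2) := by
  have := th_pos r hr
  have hc := cosh_pos r
  positivity

lemma g_mono : StrictMonoOn (fun r : ℝ => r * tanh r) (Ici 0) := by
  apply strictMonoOn_of_deriv_pos (convex_Ici 0)
  · exact fun y _ => (g_deriv y).continuousAt.continuousWithinAt
  · rw [interior_Ici]
    intro r hr
    rw [(g_deriv r).deriv]
    exact g'_pos r hr

lemma f_anti : AntitoneOn f (Ici 0) := by
  apply antitoneOn_of_deriv_nonpos (convex_Ici 0) f_cont.continuousOn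
  · rw [interior_Ici]
    exact fun y hy => (f_deriv y hy).differentiableAt.differentiableWithinAt
  · rw [interior_Ici]
    intro r hr
    have hr' : (0:ℝ) < r := hr
    rw [(f_deriv r hr).deriv]
    have := mul_nonneg (q_nonneg (2 * r) (by linarith)) (g'_pos r hr).le
    linarith

lemma g_cont : Continuous (fun r : ℝ => r * tanh r) :=
  continuous_iff_continuousAt.2 fun r => (g_deriv r).continuousAt

lemma g_surj : SurjOn (fun r : ℝ => r * tanh r) (Ici 0) (Ici 0) := by
  intro y hy
  have hy' : 0 ≤ y := hy
  have h1 := th_pos 1 one_pos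
  set R := 1 + y / tanh 1 with hR
  have hd : 0 ≤ y / tanh 1 := by positivity
  have hR1 : 1 ≤ R := by linarith
  have hm : Monotone tanh := monotone_of_deriv_nonneg
    (fun r => (hasDerivAt_th r).differentiableAt)
    (fun r => by rw [(hasDerivAt_th r).deriv]; positivity)
  have h2 : y ≤ R * tanh R := by
    have h3 : R * tanh 1 ≤ R * tanh R := mul_le_mul_of_nonneg_left (hm hR1) (by linarith)
    have h4 : R * tanh 1 = tanh 1 + y := by rw [hR]; field_simp
    linarith
  obtain ⟨r, hr, e⟩ := intermediate_value_Icc (show (0:ℝ) ≤ R by linarith) g_cont.continuousOn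
    (show y ∈ Icc _ _ from ⟨by simpa using hy', h2⟩)
  exact ⟨r, hr.1, e⟩

lemma g_bij : BijOn (fun r : ℝ => r * tanh r) (Ici 0) (Ici 0) := by
  refine ⟨?_, g_mono.injOn, g_surj⟩
  intro r hr
  have := g_mono.monotoneOn self_mem_Ici hr hr
  simpa using this

lemma slope_eq (a b : ℝ) (ha : 0 ≤ a) (hab : a < b) : ∃ c ∈ Ioo a b,
    (f b - f a) / (b * tanh b - a * tanh a) = -4 * q (2 * c) := by
  obtain ⟨c, hc, e⟩ := exists_ratio_hasDerivAt_eq_ratio_slope f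
    (fun r => - 4 * q (2 * r) * (tanh r + r * (1 / cosh r ^ 2))) hab f_cont.continuousOn
    (fun x hx => f_deriv x (ha.trans_lt hx.1)) (fun r => r * tanh r)
    (fun r => tanh r + r * (1 / cosh r ^ 2)) g_cont.continuousOn (fun x _ => g_deriv x)
  refine ⟨c, hc, ?_⟩
  have h1 : a * tanh a < b * tanh b := g_mono ha (ha.trans hab.le) hab
  have h2 := g'_pos c (ha.trans_lt hc.1)
  rw [div_eq_iff (by linarith)]
  apply mul_right_cancel₀ h2.ne'
  linear_combination -e

end Aux5

open Aux5 in
theorem stmt5 :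
    StrictMonoOn (fun r : ℝ => r * Real.tanh r) (Set.Ici 0) ∧
    ContinuousOn (fun r : ℝ => r * Real.tanh r) (Set.Ici 0) ∧
    Set.BijOn (fun r : ℝ => r * Real.tanh r) (Set.Ici 0) (Set.Ici 0) ∧
    ∃ Φ : ℝ → ℝ,
      ((∀ r : ℝ, 0 < r → Φ (r * Real.tanh r) = Real.tanh r / r) ∧ Φ 0 = 1) ∧
      (∀ x ∈ Set.Ici (0 : ℝ), Φ x ∈ Set.Ioc (0 : ℝ) 1) ∧
      AntitoneOn Φ (Set.Ici 0) ∧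
      ConvexOn ℝ (Set.Ici 0) Φ ∧
      (∀ Ψ : ℝ → ℝ,
        ((∀ r : ℝ, 0 < r → Ψ (r * Real.tanh r) = Real.tanh r / r) ∧ Ψ 0 = 1) →
        Set.EqOn Ψ Φ (Set.Ici 0)) := by
  refine ⟨g_mono, g_cont.continuousOn, g_bij, ?_⟩
  obtain ⟨Φ, hΦ⟩ : ∃ Φ : ℝ → ℝ, ∀ r, 0 ≤ r → Φ (r * tanh r) = f r := by
    refine ⟨fun x => f (Function.invFunOn (fun r : ℝ => r * tanh r) (Ici 0) x), ?_⟩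
    intro r hr
    have := g_mono.injOn.leftInvOn_invFunOn (show r ∈ Ici (0:ℝ) from hr)
    simp only at this ⊢
    rw [this]
  have h0 : Φ 0 = 1 := by have := hΦ 0 le_rfl; simpa [f_zero] using this
  have hp : ∀ r : ℝ, 0 < r → Φ (r * Real.tanh r) = Real.tanh r / r :=
    fun r hr => by rw [hΦ r hr.le, f_pos r hr.ne']
  refine ⟨Φ, ⟨hp, h0⟩, ?_, ?_, ?_, ?_⟩
  · intro x hx
    obtain ⟨r, hr, rfl⟩ := g_surj hx
    have hr' : 0 ≤ r := hr
    simp only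
    rw [hΦ r hr]
    constructor
    · rcases hr'.eq_or_lt with h | h
      · rw [← h, f_zero]; exact one_pos
      · rw [f_pos r h.ne']; exact div_pos (th_pos r h) h
    · rw [← f_zero]; exact f_anti self_mem_Ici hr hr
  · intro x hx y hy hxy
    obtain ⟨r, hr, rfl⟩ := g_surj hx
    obtain ⟨s, hs, rfl⟩ := g_surj hy
    simp only
    rw [hΦ r hr, hΦ s hs]
    exact f_anti hr hs ((g_mono.le_iff_le hr hs).1 hxy)
  · apply convexOn_of_slope_mono_adjacent (convex_Ici 0)
    intro x y z hx hz hxy hyz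
    have hy : y ∈ Ici (0:ℝ) := le_trans hx hxy.le
    obtain ⟨a, ha, rfl⟩ := g_surj hx
    obtain ⟨b, hb, rfl⟩ := g_surj hy
    obtain ⟨c, hc, rfl⟩ := g_surj hz
    have hab := (g_mono.lt_iff_lt ha hb).1 hxy
    have hbc := (g_mono.lt_iff_lt hb hc).1 hyz
    simp only
    rw [hΦ a ha, hΦ b hb, hΦ c hc]
    obtain ⟨u, hu, e1⟩ := slope_eq a b ha hab
    obtain ⟨v, hv, e2⟩ := slope_eq b c hb hbc
    rw [e1, e2]
    have ha' : 0 ≤ a := ha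
    have hu0 : 0 < u := ha'.trans_lt hu.1
    have huv : u < v := hu.2.trans hv.1
    have := q_anti (show 2 * u ∈ Ioi (0:ℝ) by simpa using hu0)
      (show 2 * v ∈ Ioi (0:ℝ) by simpa using hu0.trans huv) (by linarith)
    linarith
  · rintro Ψ ⟨h1, h2⟩ x hx
    obtain ⟨r, hr, rfl⟩ := g_surj hx
    rcases (show 0 ≤ r from hr).eq_or_lt with h | h
    · subst h; simp [h0, h2]
    · simp only; rw [h1 r h, hp r h]
end

section
/- The function Φ : [0,∞) → (0,1] defined implicitly by Φ(r·tanh(r)) = tanh(r)/r for r > 0 and Φ(0) = 1 satisfies, for every t > 0, the lower bounds Φ(t) ≥ (1 − e^{−t})/t ≥ max{0, 1 − t/2}. -/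
theorem aux_mono (r : ℝ) (hr : 0 ≤ r) :
    r * (Real.sinh r / Real.cosh r) ≤ 2 * Real.log (Real.cosh r) := by
  have hd : ∀ x : ℝ, HasDerivAt
      (fun x => 2 * Real.log (Real.cosh x) - x * (Real.sinh x / Real.cosh x))
      (2 * (Real.sinh x / Real.cosh x) - (1 * (Real.sinh x / Real.cosh x) +
        x * ((Real.cosh x * Real.cosh x - Real.sinh x * Real.sinh x) / Real.cosh x ^ 2))) x := by
    intro x
    have hc := (Real.cosh_pos x).ne'
    exact (((Real.hasDerivAt_cosh x).log hc).const_mul 2).sub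
      ((hasDerivAt_id x).mul ((Real.hasDerivAt_sinh x).div (Real.hasDerivAt_cosh x) hc))
  have hm : MonotoneOn (fun x => 2 * Real.log (Real.cosh x) - x * (Real.sinh x / Real.cosh x))
      (Set.Ici 0) := by
    refine monotoneOn_of_deriv_nonneg (convex_Ici 0)
      (fun x _ => (hd x).continuousAt.continuousWithinAt)
      (fun x _ => (hd x).differentiableAt.differentiableWithinAt) ?_
    intro x hx
    rw [interior_Ici] at hx
    have hx : 0 < x := hx
    rw [(hd x).deriv]
    have hc := Real.cosh_pos x
    have h1 := Real.one_le_cosh x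
    have h2 := Real.self_le_sinh_iff.2 hx.le
    have h3 : Real.cosh x * Real.cosh x - Real.sinh x * Real.sinh x = 1 := by
      have := Real.cosh_sq_sub_sinh_sq x
      linarith
    rw [h3]
    have : 2 * (Real.sinh x / Real.cosh x) - (1 * (Real.sinh x / Real.cosh x) +
        x * (1 / Real.cosh x ^ 2)) = (Real.sinh x * Real.cosh x - x) / Real.cosh x ^ 2 := by
      field_simp
      ring
    rw [this]
    apply div_nonneg _ (by positivity)
    nlinarith
  have := hm (Set.mem_Ici.2 le_rfl) (Set.mem_Ici.2 hr) hr
  simp at this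
  linarith

theorem aux_exists (t : ℝ) (ht : 0 < t) : ∃ r : ℝ, 0 < r ∧ r * Real.tanh r = t := by
  have hcont : Continuous fun r : ℝ => r * Real.tanh r := by
    simp only [Real.tanh_eq_sinh_div_cosh]
    exact continuous_id.mul
      (Real.continuous_sinh.div Real.continuous_cosh fun x => (Real.cosh_pos x).ne')
  have hR : t ≤ (t + 1) * Real.tanh (t + 1) := by
    rw [Real.tanh_eq_sinh_div_cosh, ← mul_div_assoc, le_div_iff₀ (Real.cosh_pos _),
      Real.sinh_eq, Real.cosh_eq]
    have hE := Real.exp_pos (t + 1)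
    have hF := Real.exp_pos (-(t + 1))
    have h1 : Real.exp (t + 1) = Real.exp (2 * (t + 1)) * Real.exp (-(t + 1)) := by
      rw [← Real.exp_add]; ring_nf
    have h2 := Real.add_one_le_exp (2 * (t + 1))
    have h3 : (2 * (t + 1) + 1) * Real.exp (-(t + 1)) ≤ Real.exp (t + 1) := by
      rw [h1]; gcongr
    nlinarith
  obtain ⟨r, hr, h⟩ := intermediate_value_Icc (by linarith : (0:ℝ) ≤ t + 1) hcont.continuousOn
    (show t ∈ Set.Icc _ _ from ⟨by simpa using ht.le, hR⟩)
  refine ⟨r, lt_of_le_of_ne hr.1 ?_, h⟩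
  rintro rfl
  simp at h
  linarith

theorem stmt6 (Φ : ℝ → ℝ)
    (hΦ : ∀ r : ℝ, 0 < r → Φ (r * Real.tanh r) = Real.tanh r / r)
    (hΦ0 : Φ 0 = 1) :
    ∀ t : ℝ, 0 < t →
      Φ t ≥ (1 - Real.exp (-t)) / t ∧
      (1 - Real.exp (-t)) / t ≥ max 0 (1 - t / 2) := by
  intro t ht
  constructor
  · obtain ⟨r, hr, h⟩ := aux_exists t ht
    have hc := Real.cosh_pos r
    have hm := aux_mono r hr.le
    rw [← Real.tanh_eq_sinh_div_cosh, h] at hm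
    have he : (Real.cosh r ^ 2)⁻¹ ≤ Real.exp (-t) := by
      rw [Real.exp_neg]
      apply inv_anti₀ (Real.exp_pos _)
      rw [← Real.exp_log (show 0 < Real.cosh r ^ 2 by positivity), Real.log_pow]
      exact Real.exp_le_exp.2 (by simpa using hm)
    have h2 : Real.tanh r ^ 2 = 1 - (Real.cosh r ^ 2)⁻¹ := by
      rw [Real.tanh_eq_sinh_div_cosh]
      field_simp
      linarith [Real.cosh_sq_sub_sinh_sq r]
    have h3 : Φ t = Real.tanh r / r := by rw [← h]; exact hΦ r hr
    rw [h3, ge_iff_le, div_le_div_iff₀ ht hr]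
    have : Real.tanh r * t = Real.tanh r ^ 2 * r := by rw [← h]; ring
    rw [this]
    gcongr
    linarith
  · have h1 := Real.quadratic_le_exp_of_nonneg ht.le
    have h4 : Real.exp (-t) ≤ 1 - t + t ^ 2 / 2 := by
      rw [Real.exp_neg, inv_le_iff_one_le_mul₀ (Real.exp_pos t)]
      have : 0 ≤ 1 - t + t ^ 2 / 2 := by nlinarith [sq_nonneg (t - 1)]
      nlinarith [mul_le_mul_of_nonneg_left h1 this, sq_nonneg (t ^ 2)]
    have h5 : Real.exp (-t) ≤ 1 := Real.exp_le_one_iff.2 (by linarith)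
    apply max_le
    · exact div_nonneg (by linarith) ht.le
    · rw [le_div_iff₀ ht]; nlinarith
end
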